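/- Let G^i be a spray with coefficients N^i_j and let F̃ be a Finsler structure on U. If F̃ satisfies the Hamel equation S(∂F̃/∂y^i) − ∂F̃/∂x^i = 0 on Ω for all i (i.e. S is projectively related to F̃), then the following geodesic invariance holds on Ω for all i, j: ∇(∂²F̃/∂y^i∂y^j) = S(∂²F̃/∂y^i∂y^j) − Σ_k (N^k_i ∂²F̃/∂y^k∂y^j + N^k_j ∂²F̃/∂y^i∂y^k) = 0; equivalently, the tensor (1/F̃)(g̃_{ij} − (∂F̃/∂y^i)(∂F̃/∂y^j)) = ∂²F̃/∂y^i∂y^j, built from the angular metric of F̃, is covariant constant with respect to the dynamical covariant derivative. -/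

import Mathlib

noncomputable section

/-- A point `(x, y)` of the tangent space coordinates over `ℝⁿ`. -/
abbrev Pt (n : ℕ) : Type := (Fin n → ℝ) × (Fin n → ℝ)

/-- `Ω = U × (ℝⁿ \ {0})`. -/
def OmegaSet {n : ℕ} (U : Set (Fin n → ℝ)) : Set (Pt n) :=
  {p : Pt n | p.1 ∈ U ∧ p.2 ≠ 0}

/-- Partial derivative `∂f/∂x^i`. -/
def pdx {n : ℕ} (f : Pt n → ℝ) (i : Fin n) (p : Pt n) : ℝ :=
  fderiv ℝ f p (Pi.single i 1, 0)

/-- Partial derivative `∂f/∂y^i`. -/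
def pdy {n : ℕ} (f : Pt n → ℝ) (i : Fin n) (p : Pt n) : ℝ :=
  fderiv ℝ f p (0, Pi.single i 1)

/-- Second fibre derivative `∂²f/∂y^i∂y^j`. -/
def pdyy {n : ℕ} (f : Pt n → ℝ) (i j : Fin n) : Pt n → ℝ :=
  pdy (pdy f j) i

/-- The spray vector field applied to a function:
`S(f) = Σ_k (y^k ∂f/∂x^k − 2 G^k ∂f/∂y^k)`. -/
def Sop {n : ℕ} (G : Fin n → Pt n → ℝ) (f : Pt n → ℝ) (p : Pt n) : ℝ :=
  ∑ k, (p.2 k * pdx f k p - 2 * G k p * pdy f k p)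

/-- Connection coefficients `N^i_j = ∂G^i/∂y^j`. -/
def Ncoef {n : ℕ} (G : Fin n → Pt n → ℝ) (i j : Fin n) : Pt n → ℝ :=
  pdy (G i) j

/-- Horizontal derivative `δf/δx^i = ∂f/∂x^i − Σ_j N^j_i ∂f/∂y^j`. -/
def deltax {n : ℕ} (G : Fin n → Pt n → ℝ) (f : Pt n → ℝ) (i : Fin n) (p : Pt n) : ℝ :=
  pdx f i p - ∑ j, Ncoef G j i p * pdy f j p

/-- Dynamical covariant derivative of a `(0,2)` family:
`∇T_{ij} = S(T_{ij}) − Σ_k (N^k_i T_{kj} + N^k_j T_{ik})`. -/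
def nablaT {n : ℕ} (G : Fin n → Pt n → ℝ) (T : Fin n → Fin n → Pt n → ℝ)
    (i j : Fin n) (p : Pt n) : ℝ :=
  Sop G (T i j) p - ∑ k, (Ncoef G k i p * T k j p + Ncoef G k j p * T i k p)

/-- `f` is positively `k`-homogeneous in the fibre variable `y`, on `Ω`. -/
def PosHomog {n : ℕ} (U : Set (Fin n → ℝ)) (k : ℤ) (f : Pt n → ℝ) : Prop :=
  ∀ L : ℝ, 0 < L → ∀ p ∈ OmegaSet U, f (p.1, L • p.2) = L ^ k * f p

/-- A spray: smooth, positively 2-homogeneous coefficients `G^i`. -/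
def IsSpray {n : ℕ} (U : Set (Fin n → ℝ)) (G : Fin n → Pt n → ℝ) : Prop :=
  ∀ i, ContDiffOn ℝ (⊤ : ℕ∞) (G i) (OmegaSet U) ∧ PosHomog U 2 (G i)

/-- Components of the Euler-Lagrange 1-form: `(δ_S f)_i = S(∂f/∂y^i) − ∂f/∂x^i`. -/
def EL {n : ℕ} (G : Fin n → Pt n → ℝ) (f : Pt n → ℝ) (i : Fin n) (p : Pt n) : ℝ :=
  Sop G (pdy f i) p - pdx f i p

/-- The metric tensor `g_{ij} = ½ ∂²(F²)/∂y^i∂y^j` of a Finsler function. -/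
def metricTensor {n : ℕ} (F : Pt n → ℝ) (i j : Fin n) (p : Pt n) : ℝ :=
  (1 / 2) * pdyy (fun q => F q ^ 2) i j p

/-- A Finsler structure on `U`: smooth, positive, positively 1-homogeneous,
with invertible metric tensor at every point of `Ω`. -/
def IsFinsler {n : ℕ} (U : Set (Fin n → ℝ)) (F : Pt n → ℝ) : Prop :=
  ContDiffOn ℝ (⊤ : ℕ∞) F (OmegaSet U) ∧ (∀ p ∈ OmegaSet U, 0 < F p) ∧ PosHomog U 1 F ∧
    ∀ p ∈ OmegaSet U, IsUnit (Matrix.of (fun i j => metricTensor F i j p))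

/-!
Differentiating the Euler-Lagrange form along the fibre gives, by the commutator formula for
`∂/∂y^i` and `S`,
`∂(δ_S f)_j/∂y^i = S(f_ij) − 2 Σ_k N^k_i f_kj + (∂²f/∂x^i∂y^j − ∂²f/∂x^j∂y^i)`, where
`f_ij = ∂²f/∂y^i∂y^j`. The last bracket is skew in `i, j`, so symmetrising leaves
`∇f_ij = ½ (∂(δ_S f)_j/∂y^i + ∂(δ_S f)_i/∂y^j)`, which vanishes when `δ_S f = 0`.
-/

open Filter Topology

section Symmetry

variable {E F : Type*} [NormedAddCommGroup E] [NormedSpace ℝ E]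
  [NormedAddCommGroup F] [NormedSpace ℝ F]

theorem fderiv_fderiv_apply_comm {f : E → F} {x : E} (hf : ContDiffAt ℝ 2 f x) (v w : E) :
    fderiv ℝ (fun z => fderiv ℝ f z v) x w = fderiv ℝ (fun z => fderiv ℝ f z w) x v := by
  have hdf : DifferentiableAt ℝ (fderiv ℝ f) x :=
    (hf.fderiv_right (m := 1) (by norm_num)).differentiableAt (by norm_num)
  have hsymm : IsSymmSndFDerivAt ℝ f x := hf.isSymmSndFDerivAt (by simp)
  rw [fderiv_clm_apply hdf (differentiableAt_const v),
    fderiv_clm_apply hdf (differentiableAt_const w)]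
  simpa using hsymm w v

end Symmetry

section PartialDerivatives

variable {n : ℕ} {f g : Pt n → ℝ} {p : Pt n}

theorem pdx_congr (h : f =ᶠ[𝓝 p] g) (i : Fin n) : pdx f i p = pdx g i p := by
  rw [pdx, pdx, h.fderiv_eq]

theorem pdy_congr (h : f =ᶠ[𝓝 p] g) (i : Fin n) : pdy f i p = pdy g i p := by
  rw [pdy, pdy, h.fderiv_eq]

theorem contDiffAt_pdx {m k : WithTop ℕ∞} (hf : ContDiffAt ℝ k f p) (hmk : m + 1 ≤ k)
    (i : Fin n) : ContDiffAt ℝ m (pdx f i) p :=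
  (hf.fderiv_right hmk).clm_apply contDiffAt_const

theorem contDiffAt_pdy {m k : WithTop ℕ∞} (hf : ContDiffAt ℝ k f p) (hmk : m + 1 ≤ k)
    (i : Fin n) : ContDiffAt ℝ m (pdy f i) p :=
  (hf.fderiv_right hmk).clm_apply contDiffAt_const

theorem differentiableAt_pdx (hf : ContDiffAt ℝ 2 f p) (i : Fin n) :
    DifferentiableAt ℝ (pdx f i) p :=
  (contDiffAt_pdx (m := 1) hf (by norm_num) i).differentiableAt one_ne_zero

theorem differentiableAt_pdy (hf : ContDiffAt ℝ 2 f p) (i : Fin n) :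
    DifferentiableAt ℝ (pdy f i) p :=
  (contDiffAt_pdy (m := 1) hf (by norm_num) i).differentiableAt one_ne_zero

theorem pdy_pdx_comm (hf : ContDiffAt ℝ 2 f p) (i j : Fin n) :
    pdy (pdx f j) i p = pdx (pdy f i) j p :=
  fderiv_fderiv_apply_comm hf _ _

theorem pdyy_comm (hf : ContDiffAt ℝ 2 f p) (i j : Fin n) : pdyy f i j p = pdyy f j i p :=
  fderiv_fderiv_apply_comm hf _ _

theorem pdy_snd_apply (i k : Fin n) :
    pdy (fun q : Pt n => q.2 k) i p = (Pi.single i 1 : Fin n → ℝ) k := by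
  have hcoord : HasFDerivAt (fun q : Pt n => q.2 k)
      ((ContinuousLinearMap.proj k).comp (ContinuousLinearMap.snd ℝ _ _)) p :=
    ((ContinuousLinearMap.proj (R := ℝ) (φ := fun _ : Fin n => ℝ) k).comp
      (ContinuousLinearMap.snd ℝ (Fin n → ℝ) (Fin n → ℝ))).hasFDerivAt
  rw [pdy, hcoord.fderiv]
  rfl

theorem pdy_sub (hf : DifferentiableAt ℝ f p) (hg : DifferentiableAt ℝ g p) (i : Fin n) :
    pdy (fun q => f q - g q) i p = pdy f i p - pdy g i p := by
  simp [pdy, fderiv_fun_sub hf hg]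

theorem pdy_const_mul (hf : DifferentiableAt ℝ f p) (c : ℝ) (i : Fin n) :
    pdy (fun q => c * f q) i p = c * pdy f i p := by
  simp [pdy, fderiv_const_mul hf c]

theorem pdy_mul (hf : DifferentiableAt ℝ f p) (hg : DifferentiableAt ℝ g p) (i : Fin n) :
    pdy (fun q => f q * g q) i p = pdy f i p * g p + f p * pdy g i p := by
  simp only [pdy, fderiv_fun_mul hf hg, add_apply, smul_apply, smul_eq_mul]
  ring

theorem pdy_sum {ι : Type*} {s : Finset ι} {f : ι → Pt n → ℝ}
    (hf : ∀ k ∈ s, DifferentiableAt ℝ (f k) p) (i : Fin n) :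
    pdy (fun q => ∑ k ∈ s, f k q) i p = ∑ k ∈ s, pdy (f k) i p := by
  simp [pdy, fderiv_fun_sum hf]

end PartialDerivatives

section AngularMetric

variable {n : ℕ} {f : Pt n → ℝ} {p : Pt n}

theorem pdy_sq (hf : DifferentiableAt ℝ f p) (i : Fin n) :
    pdy (fun q => f q ^ 2) i p = 2 * (f p * pdy f i p) := by
  simp only [sq, pdy_mul hf hf]
  ring

theorem metricTensor_eq_mul_pdyy_add (hf : ContDiffAt ℝ 2 f p) (i j : Fin n) :
    metricTensor f i j p = f p * pdyy f i j p + pdy f i p * pdy f j p := by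
  have hpdy_sq : pdy (fun q => f q ^ 2) j =ᶠ[𝓝 p] fun q => 2 * (f q * pdy f j q) := by
    filter_upwards [hf.eventually (by simp)] with q hq
    exact pdy_sq (hq.differentiableAt two_ne_zero) j
  have hfp : DifferentiableAt ℝ f p := hf.differentiableAt two_ne_zero
  have hfj : DifferentiableAt ℝ (pdy f j) p := differentiableAt_pdy hf j
  rw [metricTensor, pdyy, pdy_congr hpdy_sq, pdy_const_mul (hfp.fun_mul hfj), pdy_mul hfp hfj,
    pdyy]
  ring

theorem one_div_mul_angularMetric_eq_pdyy (hf : ContDiffAt ℝ 2 f p) (hfp : f p ≠ 0)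
    (i j : Fin n) :
    (1 / f p) * (metricTensor f i j p - pdy f i p * pdy f j p) = pdyy f i j p := by
  rw [metricTensor_eq_mul_pdyy_add hf, add_sub_cancel_right, one_div, inv_mul_cancel_left₀ hfp]

end AngularMetric

section DynamicalCovariantDerivative

variable {n : ℕ} {G : Fin n → Pt n → ℝ} {f g : Pt n → ℝ} {p : Pt n}

theorem Sop_congr (h : f =ᶠ[𝓝 p] g) : Sop G f p = Sop G g p := by
  simp only [Sop, pdx_congr h, pdy_congr h]

theorem nablaT_congr {T T' : Fin n → Fin n → Pt n → ℝ} (h : ∀ i j, T i j =ᶠ[𝓝 p] T' i j)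
    (i j : Fin n) : nablaT G T i j p = nablaT G T' i j p := by
  simp only [nablaT, Sop_congr (h i j), (h _ _).eq_of_nhds]

theorem differentiableAt_Sop (hG : ∀ k, DifferentiableAt ℝ (G k) p) (hf : ContDiffAt ℝ 2 f p) :
    DifferentiableAt ℝ (Sop G f) p := by
  have hx := differentiableAt_pdx hf
  have hy := differentiableAt_pdy hf
  unfold Sop
  fun_prop

theorem pdy_Sop (hG : ∀ k, DifferentiableAt ℝ (G k) p) (hf : ContDiffAt ℝ 2 f p) (i : Fin n) :
    pdy (Sop G f) i p
      = Sop G (pdy f i) p + pdx f i p - 2 * ∑ k, Ncoef G k i p * pdy f k p := by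
  have hx := differentiableAt_pdx hf
  have hy := differentiableAt_pdy hf
  have hsummand (k : Fin n) :
      pdy (fun q => q.2 k * pdx f k q - 2 * G k q * pdy f k q) i p
        = (p.2 k * pdx (pdy f i) k p - 2 * G k p * pdy (pdy f i) k p)
          + (Pi.single i 1 : Fin n → ℝ) k * pdx f k p
          - 2 * (Ncoef G k i p * pdy f k p) := by
    have hyy : pdy (pdy f k) i p = pdy (pdy f i) k p := pdyy_comm hf i k
    rw [pdy_sub (by fun_prop) (by fun_prop), pdy_mul (by fun_prop) (hx k),
      pdy_mul (by fun_prop) (hy k), pdy_const_mul (hG k), pdy_snd_apply, pdy_pdx_comm hf, hyy,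
      Ncoef]
    ring
  calc pdy (Sop G f) i p
      = ∑ k, pdy (fun q => q.2 k * pdx f k q - 2 * G k q * pdy f k q) i p :=
        pdy_sum (fun k _ => by fun_prop) i
    _ = _ := by
        simp only [hsummand, Sop, Finset.sum_sub_distrib, Finset.sum_add_distrib,
          ← Finset.mul_sum, Pi.single_apply, ite_mul, one_mul, zero_mul, Finset.sum_ite_eq',
          Finset.mem_univ, if_true]

theorem pdy_EL (hG : ∀ k, DifferentiableAt ℝ (G k) p) (hf : ContDiffAt ℝ 3 f p) (i j : Fin n) :
    pdy (EL G f j) i p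
      = Sop G (pdyy f i j) p - 2 * ∑ k, Ncoef G k i p * pdyy f k j p
        + (pdx (pdy f j) i p - pdx (pdy f i) j p) := by
  have hf2 : ContDiffAt ℝ 2 f p := hf.of_le (by norm_num)
  have hfj : ContDiffAt ℝ 2 (pdy f j) p := contDiffAt_pdy hf (by norm_num) j
  calc pdy (EL G f j) i p = pdy (Sop G (pdy f j)) i p - pdy (pdx f j) i p :=
        pdy_sub (differentiableAt_Sop hG hfj) (differentiableAt_pdx hf2 j) i
    _ = _ := by
        rw [pdy_Sop hG hfj, pdy_pdx_comm hf2]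
        simp only [pdyy]
        ring

theorem nablaT_pdyy_eq_half_pdy_EL_add (hG : ∀ k, DifferentiableAt ℝ (G k) p)
    (hf : ContDiffAt ℝ 3 f p) (i j : Fin n) :
    nablaT G (pdyy f) i j p = (1 / 2) * (pdy (EL G f j) i p + pdy (EL G f i) j p) := by
  have hf2 : ContDiffAt ℝ 2 f p := hf.of_le (by norm_num)
  have hsymm : pdyy f j i =ᶠ[𝓝 p] pdyy f i j := by
    filter_upwards [hf2.eventually (by simp)] with q hq using pdyy_comm hq j i
  rw [pdy_EL hG hf, pdy_EL hG hf, Sop_congr hsymm, nablaT, Finset.sum_add_distrib]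
  simp only [pdyy_comm hf2 i]
  ring

theorem nablaT_pdyy_eq_zero (hG : ∀ k, DifferentiableAt ℝ (G k) p) (hf : ContDiffAt ℝ 3 f p)
    (hEL : ∀ i, EL G f i =ᶠ[𝓝 p] 0) (i j : Fin n) : nablaT G (pdyy f) i j p = 0 := by
  have hpdy (i j : Fin n) : pdy (EL G f j) i p = 0 := by simp [pdy, (hEL j).fderiv_eq]
  rw [nablaT_pdyy_eq_half_pdy_EL_add hG hf, hpdy, hpdy, add_zero, mul_zero]

end DynamicalCovariantDerivative

theorem isOpen_OmegaSet {n : ℕ} {U : Set (Fin n → ℝ)} (hU : IsOpen U) : IsOpen (OmegaSet U) :=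
  (hU.preimage continuous_fst).inter (isOpen_ne.preimage continuous_snd)

theorem statement8_general {n : ℕ} {G : Fin n → Pt n → ℝ} {f : Pt n → ℝ} {p : Pt n}
    (hG : ∀ k, DifferentiableAt ℝ (G k) p) (hf : ContDiffAt ℝ 3 f p)
    (hEL : ∀ i, EL G f i =ᶠ[𝓝 p] 0) (i j : Fin n) :
    nablaT G (pdyy f) i j p = 0 ∧
      (f p ≠ 0 →
        nablaT G
          (fun i j q => (1 / f q) * (metricTensor f i j q - pdy f i q * pdy f j q)) i j p = 0) := by
  have hzero := nablaT_pdyy_eq_zero hG hf hEL i j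
  refine ⟨hzero, fun hfp => ?_⟩
  rw [← hzero]
  refine nablaT_congr (fun i j => ?_) i j
  filter_upwards [hf.eventually (by simp), hf.continuousAt.eventually_ne hfp] with q hq hfq
  exact one_div_mul_angularMetric_eq_pdyy (hq.of_le (by norm_num)) hfq i j

/-- Theorem 2 ii): if the Hamel equations `δ_S F̃ = 0` hold, then
`∇(∂²F̃/∂y^i∂y^j) = 0`, i.e. the angular-metric tensor `(1/F̃) h̃_{ij}
= (1/F̃)(g̃_{ij} − ∂F̃/∂y^i ∂F̃/∂y^j) = ∂²F̃/∂y^i∂y^j` is covariant constant. -/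
theorem statement8 {n : ℕ} (hn : 1 ≤ n) (U : Set (Fin n → ℝ)) (hU : IsOpen U)
    (G : Fin n → Pt n → ℝ) (hG : IsSpray U G)
    (Ft : Pt n → ℝ) (hFt : IsFinsler U Ft)
    (hHamel : ∀ i, ∀ p ∈ OmegaSet U, EL G Ft i p = 0) :
    (∀ i j, ∀ p ∈ OmegaSet U, nablaT G (pdyy Ft) i j p = 0) ∧
      (∀ i j, ∀ p ∈ OmegaSet U,
        nablaT G
          (fun i j q =>
            (1 / Ft q) * (metricTensor Ft i j q - pdy Ft i q * pdy Ft j q)) i j p = 0) := by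
  have hgeneral (i j : Fin n) (p : Pt n) (hp : p ∈ OmegaSet U) :=
    have hΩ : OmegaSet U ∈ 𝓝 p := (isOpen_OmegaSet hU).mem_nhds hp
    statement8_general
      (fun k => ((hG k).1.contDiffAt hΩ).differentiableAt (by simp))
      (contDiffAt_infty.1 (hFt.1.contDiffAt hΩ) 3)
      (fun i => eventuallyEq_of_mem hΩ (hHamel i)) i j
  exact ⟨fun i j p hp => (hgeneral i j p hp).1,
    fun i j p hp => (hgeneral i j p hp).2 (hFt.2.1 p hp).ne'⟩
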